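/- Let d be a graph pseudometric on a set X with edge set E, let xy ∈ [X]² \ E, let r be a real number with ď(x,y) ≤ r ≤ d̂(x,y), and let D = d ∪ {⟨xy,r⟩}. Then for all u, v ∈ X with d̂(u,v) ≠ D̂(u,v), we have D̂(u,v) − ď(u,v) ≥ r − ď(x,y). -/

import Mathlib

open scoped Classical

universe u

namespace GraphMetricPaper

variable {X : Type u}

/-- The vertex set `V = ⋃ E` of a graph given by an adjacency relation `E`. -/
def Vtx (E : X → X → Prop) : Set X := {x | ∃ y, E x y}

/-- Two points are joined by a walk in the graph `E`. -/
def Joined (E : X → X → Prop) (x y : X) : Prop :=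
  ∃ (n : ℕ) (c : ℕ → X), c 0 = x ∧ c n = y ∧ ∀ i, i < n → E (c i) (c (i + 1))

/-- The set of weights of walks from `x` to `y`. -/
def walkSums (E : X → X → Prop) (d : X → X → ℝ) (x y : X) : Set ℝ :=
  {s | ∃ (n : ℕ) (c : ℕ → X), c 0 = x ∧ c n = y ∧ (∀ i, i < n → E (c i) (c (i + 1))) ∧
    s = ∑ i ∈ Finset.range n, d (c i) (c (i + 1))}

/-- The shortest-path pseudometric `d̂` determined by a weight function `d` on a graph `E`. -/
noncomputable def hatd (E : X → X → Prop) (d : X → X → ℝ) (x y : X) : ℝ :=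
  sInf (walkSums E d x y)

/-- The function `ď` bounding the possible extensions of `d` from below:
`ď(x,y) = sup_{ab ∈ E} max {0, d(ab) - d̂(a,x) - d̂(y,b)}`. -/
noncomputable def checkd (E : X → X → Prop) (d : X → X → ℝ) (x y : X) : ℝ :=
  sSup ({0} ∪ {r | ∃ a b, E a b ∧ r = d a b - hatd E d a x - hatd E d y b})

/-- The pseudometric `d̈` on doubletons:
`d̈(xy,uv) = min {d̂(x,u) + d̂(y,v), d̂(x,v) + d̂(y,u)}`. -/
noncomputable def ddot (E : X → X → Prop) (d : X → X → ℝ) (x y u v : X) : ℝ :=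
  min (hatd E d x u + hatd E d y v) (hatd E d x v + hatd E d y u)

/-- `d` is a graph pseudometric with edge relation `E`:  `E` is a (symmetric, irreflexive)
connected graph, `d` is a nonnegative symmetric weight on the edges, and `d = d̂` on edges. -/
structure IsGraphPseudometric (E : X → X → Prop) (d : X → X → ℝ) : Prop where
  symm : ∀ ⦃a b⦄, E a b → E b a
  irrefl : ∀ a, ¬ E a a
  wt_symm : ∀ ⦃a b⦄, E a b → d a b = d b a
  nonneg : ∀ ⦃a b⦄, E a b → 0 ≤ d a b
  connected : ∀ x ∈ Vtx E, ∀ y ∈ Vtx E, Joined E x y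
  edge_eq : ∀ ⦃a b⦄, E a b → d a b = hatd E d a b

/-- A graph metric is a graph pseudometric with strictly positive weights. -/
def IsGraphMetric (E : X → X → Prop) (d : X → X → ℝ) : Prop :=
  IsGraphPseudometric E d ∧ ∀ ⦃a b⦄, E a b → 0 < d a b

/-- A floppy graph pseudometric: `ď(x,y) < d̂(x,y)` for every `xy ∈ [V]² \ E`. -/
def FloppyPseudometric (E : X → X → Prop) (d : X → X → ℝ) : Prop :=
  IsGraphPseudometric E d ∧
    ∀ x ∈ Vtx E, ∀ y ∈ Vtx E, x ≠ y → ¬ E x y → checkd E d x y < hatd E d x y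

/-- A floppy graph metric: `ď(x,y) < d̂(x,y)` for every `xy ∈ [V]² \ E`. -/
def FloppyMetric (E : X → X → Prop) (d : X → X → ℝ) : Prop :=
  IsGraphMetric E d ∧
    ∀ x ∈ Vtx E, ∀ y ∈ Vtx E, x ≠ y → ¬ E x y → checkd E d x y < hatd E d x y

/-- The edge relation of the one-step extension `E ∪ {xy}`. -/
def extEdge (E : X → X → Prop) (x y : X) : X → X → Prop :=
  fun a b => E a b ∨ (a = x ∧ b = y) ∨ (a = y ∧ b = x)

/-- The weight function of the one-step extension `d ∪ {⟨xy, r⟩}`. -/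
noncomputable def extWt (d : X → X → ℝ) (x y : X) (r : ℝ) : X → X → ℝ :=
  fun a b => if (a = x ∧ b = y) ∨ (a = y ∧ b = x) then r else d a b

/-- The set `[V]² \ E` of unordered pairs of distinct vertices that are not edges. -/
def nonEdgePairs (E : X → X → Prop) : Set (Sym2 X) :=
  {e | ∃ a b : X, e = s(a, b) ∧ a ≠ b ∧ a ∈ Vtx E ∧ b ∈ Vtx E ∧ ¬ E a b}

/-- A set of (unordered) weighted pairs, presented as a relation `R`, is a full metric
on `V`: it is symmetric, its domain is exactly `[V]²`, it is single-valued, positive,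
and satisfies the triangle inequality. -/
def IsFullMetricRel (V : Set X) (R : X → X → ℝ → Prop) : Prop :=
  (∀ a b r, R a b r → R b a r) ∧
  (∀ a b r, R a b r → a ∈ V ∧ b ∈ V ∧ a ≠ b) ∧
  (∀ a b, a ∈ V → b ∈ V → a ≠ b → ∃ r, R a b r) ∧
  (∀ a b r s, R a b r → R a b s → r = s) ∧
  (∀ a b r, R a b r → 0 < r) ∧
  (∀ a b c r s t, R a b r → R b c s → R a c t → t ≤ r + s)

/-- A weight function `D` on `[V]²` is a full metric on `V`. -/
def IsFullMetricOn (V : Set X) (D : X → X → ℝ) : Prop :=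
  (∀ a b, a ∈ V → b ∈ V → a ≠ b → D a b = D b a) ∧
  (∀ a b, a ∈ V → b ∈ V → a ≠ b → 0 < D a b) ∧
  (∀ a b c, a ∈ V → b ∈ V → c ∈ V → a ≠ b → b ≠ c → a ≠ c → D a c ≤ D a b + D b c)

/-- Player I has a winning strategy in the metric-extending game `Game_d(lam, Fam)`:
there are functions `S1, S2` choosing, for each inning `β < lam` and each sequence of
previous answers of player II, a legal doubleton in `[V]²` and a set from `Fam`, such that
for every play of player II respecting the strategy, the resulting relation
`d ∪ {⟨x_α y_α, r_α⟩ : α < lam}` is a full metric on `V`. -/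
def WinningStratI (V : Set X) (E : X → X → Prop) (d : X → X → ℝ)
    (lam : Ordinal.{u}) (Fam : Set (Set ℝ)) : Prop :=
  ∃ (S1 : ∀ β : Ordinal.{u}, β < lam → (∀ α : Ordinal.{u}, α < β → ℝ) → X × X)
    (S2 : ∀ β : Ordinal.{u}, β < lam → (∀ α : Ordinal.{u}, α < β → ℝ) → Set ℝ),
    (∀ β hβ s, S2 β hβ s ∈ Fam) ∧
    (∀ β hβ s, (S1 β hβ s).1 ∈ V ∧ (S1 β hβ s).2 ∈ V ∧ (S1 β hβ s).1 ≠ (S1 β hβ s).2) ∧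
    (∀ s : ∀ α : Ordinal.{u}, α < lam → ℝ,
      (∀ α (hα : α < lam), s α hα ∈ S2 α hα (fun γ hγ => s γ (hγ.trans hα))) →
      IsFullMetricRel V (fun a b r =>
        (E a b ∧ r = d a b) ∨
        ∃ α, ∃ hα : α < lam,
          ((a = (S1 α hα (fun γ hγ => s γ (hγ.trans hα))).1 ∧
            b = (S1 α hα (fun γ hγ => s γ (hγ.trans hα))).2) ∨
           (a = (S1 α hα (fun γ hγ => s γ (hγ.trans hα))).2 ∧
            b = (S1 α hα (fun γ hγ => s γ (hγ.trans hα))).1)) ∧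
          r = s α hα))

/-- Player II has a winning strategy in the metric-extending game `Game_d(lam, Fam)`:
there is a function `T` assigning to each inning `β < lam` and each sequence of moves of
player I (of length `β + 1`) an answer in the set component of the last move, such that
for every legal play of player I, the resulting relation is not a full metric on `V`. -/
def WinningStratII (V : Set X) (E : X → X → Prop) (d : X → X → ℝ)
    (lam : Ordinal.{u}) (Fam : Set (Set ℝ)) : Prop :=
  ∃ T : ∀ β : Ordinal.{u}, β < lam → (∀ α : Ordinal.{u}, α ≤ β → (X × X) × Set ℝ) → ℝ,
    (∀ β hβ p, (p β le_rfl).2 ∈ Fam → T β hβ p ∈ (p β le_rfl).2) ∧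
    (∀ p : ∀ α : Ordinal.{u}, α < lam → (X × X) × Set ℝ,
      (∀ α hα, (p α hα).1.1 ∈ V ∧ (p α hα).1.2 ∈ V ∧ (p α hα).1.1 ≠ (p α hα).1.2 ∧
        (p α hα).2 ∈ Fam) →
      ¬ IsFullMetricRel V (fun a b r =>
        (E a b ∧ r = d a b) ∨
        ∃ α, ∃ hα : α < lam,
          ((a = (p α hα).1.1 ∧ b = (p α hα).1.2) ∨
           (a = (p α hα).1.2 ∧ b = (p α hα).1.1)) ∧
          r = T α hα (fun γ hγ => p γ (lt_of_le_of_lt hγ hα))))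

/-- The edge relation of the glued graph `E_d = E_p ∪ ⋃_{f ∈ F} E_f`. -/
def gluedEdge (Ep : X → X → Prop) (F : Set ((X → X → Prop) × (X → X → ℝ))) :
    X → X → Prop :=
  fun a b => Ep a b ∨ ∃ f ∈ F, f.1 a b

/-- `Λ(v; B) = inf {d̂(a,v) + d̂(v,b) - d̂(a,b) : a, b ∈ B}`. -/
noncomputable def Lam (E : X → X → Prop) (d : X → X → ℝ) (v : X) (B : Set X) : ℝ :=
  sInf {r | ∃ a ∈ B, ∃ b ∈ B, r = hatd E d a v + hatd E d v b - hatd E d a b}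

/-- The gluing setup: a graph pseudometric `p = (Ep, wp)` and a family `F` of graph
pseudometrics such that each member meets `V_p`, agrees with `p̂` on the intersection of
the vertex sets, and distinct members only meet inside `V_p`; `wd` is the glued weight
function `d = p ∪ ⋃ F` on `E_d = E_p ∪ ⋃_{f ∈ F} E_f`. -/
structure GluingSetup (Ep : X → X → Prop) (wp : X → X → ℝ)
    (F : Set ((X → X → Prop) × (X → X → ℝ))) (wd : X → X → ℝ) : Prop where
  hp : IsGraphPseudometric Ep wp
  hF : ∀ f ∈ F, IsGraphPseudometric f.1 f.2
  meet : ∀ f ∈ F, (Vtx f.1 ∩ Vtx Ep).Nonempty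
  agree : ∀ f ∈ F, ∀ x ∈ Vtx f.1 ∩ Vtx Ep, ∀ y ∈ Vtx f.1 ∩ Vtx Ep, x ≠ y →
    hatd f.1 f.2 x y = hatd Ep wp x y
  inter_sub : ∀ f ∈ F, ∀ g ∈ F, f ≠ g → Vtx f.1 ∩ Vtx g.1 ⊆ Vtx Ep
  wd_p : ∀ ⦃a b⦄, Ep a b → wd a b = wp a b
  wd_F : ∀ f ∈ F, ∀ ⦃a b⦄, f.1 a b → wd a b = f.2 a b


/-!
A walk in `E ∪ {xy}` never gains from crossing the new edge twice, so
`D̂(u,v) ≥ min {d̂(u,v), r + d̈(xy,uv)}`, and `D̂(u,v) < d̂(u,v)` forces `D̂(u,v) ≥ r + d̈(xy,uv)`.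
On the other hand `ď` is 1-Lipschitz with respect to `d̈`: `ď(u,v) ≤ ď(x,y) + d̈(xy,uv)`.
Subtracting gives the estimate. All comparisons of `d̂` with other functions rest on the duality
between walks and potentials: if `f` drops by at most `d(ab)` along every edge `ab`, then
`f(u) - f(v) ≤ d̂(u,v)`.
-/

section Walks

variable {E E' : X → X → Prop} {d : X → X → ℝ} {a b u v : X} {s : ℝ}

theorem Joined.mono (hE : ∀ ⦃a b⦄, E a b → E' a b) (huv : Joined E u v) : Joined E' u v := by
  obtain ⟨n, c, hu, hv, hc⟩ := huv
  exact ⟨n, c, hu, hv, fun i hi => hE (hc i hi)⟩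

theorem Joined.walkSums_nonempty (huv : Joined E u v) (d : X → X → ℝ) :
    (walkSums E d u v).Nonempty := by
  obtain ⟨n, c, hu, hv, hc⟩ := huv
  exact ⟨_, n, c, hu, hv, hc, rfl⟩

theorem zero_mem_walkSums (E : X → X → Prop) (d : X → X → ℝ) (u : X) : 0 ∈ walkSums E d u u :=
  ⟨0, fun _ => u, rfl, rfl, fun _ hi => absurd hi (Nat.not_lt_zero _),
    (Finset.sum_range_zero _).symm⟩

theorem edge_add_mem_walkSums (hab : E a b) (hs : s ∈ walkSums E d b v) :
    d a b + s ∈ walkSums E d a v := by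
  obtain ⟨n, c, rfl, rfl, hc, rfl⟩ := hs
  refine ⟨n + 1, fun i => Nat.casesOn i a c, rfl, rfl, ?_, ?_⟩
  · rintro (_ | i) hi
    · exact hab
    · exact hc i (Nat.lt_of_succ_lt_succ hi)
  · rw [Finset.sum_range_succ', add_comm]
    rfl

theorem sub_le_of_mem_walkSums {f : X → ℝ} (hf : ∀ ⦃a b⦄, E a b → f a ≤ d a b + f b)
    (hs : s ∈ walkSums E d u v) : f u - f v ≤ s := by
  obtain ⟨n, c, rfl, rfl, hc, rfl⟩ := hs
  rw [← Finset.sum_range_sub' (fun i => f (c i))]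
  exact Finset.sum_le_sum fun i hi =>
    sub_le_iff_le_add.mpr (hf (hc i (Finset.mem_range.mp hi)))

theorem nonneg_of_mem_walkSums (hd : ∀ ⦃a b⦄, E a b → 0 ≤ d a b) (hs : s ∈ walkSums E d u v) :
    0 ≤ s := by
  obtain ⟨n, c, -, -, hc, rfl⟩ := hs
  exact Finset.sum_nonneg fun i hi => hd (hc i (Finset.mem_range.mp hi))

end Walks

section ShortestPath

variable {E : X → X → Prop} {d : X → X → ℝ} {a b u v : X} {s : ℝ}

theorem sub_le_hatd {f : X → ℝ} (hf : ∀ ⦃a b⦄, E a b → f a ≤ d a b + f b) (huv : Joined E u v) :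
    f u - f v ≤ hatd E d u v :=
  le_csInf (huv.walkSums_nonempty d) fun _ hs => sub_le_of_mem_walkSums hf hs

theorem hatd_le_of_mem_walkSums (hd : ∀ ⦃a b⦄, E a b → 0 ≤ d a b) (hs : s ∈ walkSums E d u v) :
    hatd E d u v ≤ s :=
  csInf_le ⟨0, fun _ ht => nonneg_of_mem_walkSums hd ht⟩ hs

theorem hatd_nonneg (hd : ∀ ⦃a b⦄, E a b → 0 ≤ d a b) (u v : X) : 0 ≤ hatd E d u v :=
  Real.sInf_nonneg fun _ hs => nonneg_of_mem_walkSums hd hs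

theorem hatd_self (hd : ∀ ⦃a b⦄, E a b → 0 ≤ d a b) (u : X) : hatd E d u u = 0 :=
  (hatd_le_of_mem_walkSums hd (zero_mem_walkSums E d u)).antisymm (hatd_nonneg hd u u)

theorem hatd_le_edge_add_hatd (hd : ∀ ⦃a b⦄, E a b → 0 ≤ d a b) (hab : E a b)
    (hbv : Joined E b v) : hatd E d a v ≤ d a b + hatd E d b v := by
  rw [← sub_le_iff_le_add']
  exact le_csInf (hbv.walkSums_nonempty d) fun s hs =>
    sub_le_iff_le_add'.mpr (hatd_le_of_mem_walkSums hd (edge_add_mem_walkSums hab hs))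

theorem hatd_le_of_edge (hd : ∀ ⦃a b⦄, E a b → 0 ≤ d a b) (hab : E a b) :
    hatd E d a b ≤ d a b := by
  simpa only [add_zero] using
    hatd_le_of_mem_walkSums hd (edge_add_mem_walkSums hab (zero_mem_walkSums E d b))

theorem hatd_triangle (hd : ∀ ⦃a b⦄, E a b → 0 ≤ d a b) (hconn : ∀ u v, Joined E u v)
    (u w v : X) : hatd E d u v ≤ hatd E d u w + hatd E d w v :=
  sub_le_iff_le_add.mp <| sub_le_hatd (f := fun z => hatd E d z v)
    (fun _ b hab => hatd_le_edge_add_hatd hd hab (hconn b v)) (hconn u w)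

theorem hatd_comm (hd : ∀ ⦃a b⦄, E a b → 0 ≤ d a b) (hconn : ∀ u v, Joined E u v)
    (hE : ∀ ⦃a b⦄, E a b → E b a) (hsymm : ∀ ⦃a b⦄, E a b → d a b = d b a) (u v : X) :
    hatd E d u v = hatd E d v u := by
  have hle (u v : X) : hatd E d v u ≤ hatd E d u v := by
    have hpot : ∀ ⦃a b⦄, E a b → hatd E d v a ≤ d a b + hatd E d v b := fun a b hab =>
      calc hatd E d v a ≤ hatd E d v b + hatd E d b a := hatd_triangle hd hconn v b a
        _ ≤ hatd E d v b + d b a := by gcongr; exact hatd_le_of_edge hd (hE hab)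
        _ = d a b + hatd E d v b := by rw [hsymm hab, add_comm]
    simpa only [hatd_self hd, sub_zero] using sub_le_hatd hpot (hconn u v)
  exact (hle v u).antisymm (hle u v)

end ShortestPath

section LowerBound

variable {E : X → X → Prop} {d : X → X → ℝ} {a b : X}

theorem checkd_nonneg (E : X → X → Prop) (d : X → X → ℝ) (x y : X) : 0 ≤ checkd E d x y :=
  Real.sSup_nonneg' ⟨0, Or.inl rfl, le_rfl⟩

theorem checkd_le {x y : X} {c : ℝ} (hc : 0 ≤ c)
    (h : ∀ ⦃a b⦄, E a b → d a b - hatd E d a x - hatd E d y b ≤ c) : checkd E d x y ≤ c := by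
  refine csSup_le ⟨0, Or.inl rfl⟩ ?_
  rintro s (rfl | ⟨a, b, hab, rfl⟩)
  exacts [hc, h hab]

namespace IsGraphPseudometric

theorem joined (hd : IsGraphPseudometric E d) (hvert : ∀ z, z ∈ Vtx E) (u v : X) : Joined E u v :=
  hd.connected u (hvert u) v (hvert v)

theorem hatd_comm (hd : IsGraphPseudometric E d) (hconn : ∀ u v, Joined E u v) (u v : X) :
    hatd E d u v = hatd E d v u :=
  GraphMetricPaper.hatd_comm hd.nonneg hconn hd.symm hd.wt_symm u v

theorem sub_hatd_sub_hatd_le_hatd (hd : IsGraphPseudometric E d) (hconn : ∀ u v, Joined E u v)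
    (hab : E a b) (x y : X) : d a b - hatd E d a x - hatd E d y b ≤ hatd E d x y := by
  rw [hd.edge_eq hab]
  linarith only [hatd_triangle hd.nonneg hconn a x b, hatd_triangle hd.nonneg hconn x y b]

theorem le_checkd (hd : IsGraphPseudometric E d) (hconn : ∀ u v, Joined E u v) (hab : E a b)
    (x y : X) : d a b - hatd E d a x - hatd E d y b ≤ checkd E d x y := by
  refine le_csSup ⟨hatd E d x y, ?_⟩ (Or.inr ⟨a, b, hab, rfl⟩)
  rintro s (rfl | ⟨a', b', hab', rfl⟩)
  exacts [hatd_nonneg hd.nonneg x y, hd.sub_hatd_sub_hatd_le_hatd hconn hab' x y]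

theorem checkd_comm (hd : IsGraphPseudometric E d) (hconn : ∀ u v, Joined E u v) (x y : X) :
    checkd E d x y = checkd E d y x := by
  have hle (x y : X) : checkd E d x y ≤ checkd E d y x :=
    checkd_le (checkd_nonneg E d y x) fun a b hab =>
      calc d a b - hatd E d a x - hatd E d y b = d b a - hatd E d b y - hatd E d x a := by
            rw [hd.wt_symm hab, hd.hatd_comm hconn a x, hd.hatd_comm hconn y b, sub_right_comm]
        _ ≤ checkd E d y x := hd.le_checkd hconn (hd.symm hab) y x
  exact (hle x y).antisymm (hle y x)

theorem checkd_le_hatd_add_checkd_add_hatd (hd : IsGraphPseudometric E d)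
    (hconn : ∀ u v, Joined E u v) (u v x y : X) :
    checkd E d u v ≤ hatd E d u x + checkd E d x y + hatd E d y v := by
  refine checkd_le ?_ fun a b hab => ?_
  · exact add_nonneg (add_nonneg (hatd_nonneg hd.nonneg u x) (checkd_nonneg E d x y))
      (hatd_nonneg hd.nonneg y v)
  · linarith only [hd.le_checkd hconn hab x y, hatd_triangle hd.nonneg hconn a u x,
      hatd_triangle hd.nonneg hconn y v b]

theorem checkd_le_checkd_add_ddot (hd : IsGraphPseudometric E d) (hconn : ∀ u v, Joined E u v)
    (x y u v : X) : checkd E d u v ≤ checkd E d x y + ddot E d x y u v := by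
  rw [← sub_le_iff_le_add', ddot, hd.hatd_comm hconn x u, hd.hatd_comm hconn y u]
  refine le_min ?_ ?_
  · linarith only [hd.checkd_le_hatd_add_checkd_add_hatd hconn u v x y]
  · rw [hd.checkd_comm hconn x y]
    linarith only [hd.checkd_le_hatd_add_checkd_add_hatd hconn u v y x]

end IsGraphPseudometric

end LowerBound

section Extension

variable {E : X → X → Prop} {d : X → X → ℝ} {x y a b : X} {r : ℝ}

theorem extWt_nonneg (hd : ∀ ⦃a b⦄, E a b → 0 ≤ d a b) (hr : 0 ≤ r) ⦃a b : X⦄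
    (hab : extEdge E x y a b) : 0 ≤ extWt d x y r a b := by
  rw [extWt]
  split_ifs with hnew
  exacts [hr, hd (hab.resolve_right hnew)]

theorem extWt_of_edge (hxy : ¬ E x y) (hyx : ¬ E y x) (hab : E a b) :
    extWt d x y r a b = d a b := by
  refine if_neg ?_
  rintro (⟨rfl, rfl⟩ | ⟨rfl, rfl⟩)
  exacts [hxy hab, hyx hab]

theorem hatd_extEdge_le_hatd (hd : ∀ ⦃a b⦄, E a b → 0 ≤ d a b) (hconn : ∀ u v, Joined E u v)
    (hxy : ¬ E x y) (hyx : ¬ E y x) (hr : 0 ≤ r) (u v : X) :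
    hatd (extEdge E x y) (extWt d x y r) u v ≤ hatd E d u v := by
  have hpot : ∀ ⦃a b⦄, E a b → hatd (extEdge E x y) (extWt d x y r) a v ≤
      d a b + hatd (extEdge E x y) (extWt d x y r) b v := fun a b hab => by
    rw [← extWt_of_edge (d := d) (r := r) hxy hyx hab]
    exact hatd_le_edge_add_hatd (extWt_nonneg hd hr) (Or.inl hab)
      ((hconn b v).mono fun _ _ => Or.inl)
  simpa only [hatd_self (extWt_nonneg hd hr), sub_zero] using sub_le_hatd hpot (hconn u v)

/-- The distance from `u` to `v` when a new edge `xy` of weight `r` may be used at most once,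
in either direction. It is the explicit candidate for the shortest-path pseudometric of
`d ∪ {⟨xy, r⟩}`. -/
noncomputable def detourDist (E : X → X → Prop) (d : X → X → ℝ) (x y : X) (r : ℝ) (u v : X) : ℝ :=
  min (hatd E d u v) (r + ddot E d x y u v)

theorem detourDist_swap (E : X → X → Prop) (d : X → X → ℝ) (x y : X) (r : ℝ) (u v : X) :
    detourDist E d y x r u v = detourDist E d x y r u v := by
  rw [detourDist, detourDist, ddot, ddot, min_comm (hatd E d y u + _), add_comm (hatd E d y v),
    add_comm (hatd E d y u)]

theorem detourDist_le_add_detourDist (hd : ∀ ⦃a b⦄, E a b → 0 ≤ d a b) (hr : 0 ≤ r) (x y v : X) :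
    detourDist E d x y r x v ≤ r + detourDist E d x y r y v := by
  have hxy := hatd_nonneg hd x y
  have hdirect : detourDist E d x y r x v ≤ hatd E d x v := min_le_left _ _
  have hcross : detourDist E d x y r x v ≤ r + hatd E d y v := by
    refine (min_le_right _ _).trans ?_
    gcongr
    exact (min_le_left _ _).trans_eq (by rw [hatd_self hd, zero_add])
  rw [← sub_le_iff_le_add']
  refine le_min (by linarith only [hcross]) ?_
  rw [← sub_le_iff_le_add', ddot, hatd_self hd y]
  exact le_min (by linarith only [hcross, hxy, hr]) (by linarith only [hdirect, hr])

namespace IsGraphPseudometric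

theorem ddot_le_edge_add_ddot (hd : IsGraphPseudometric E d) (hconn : ∀ u v, Joined E u v)
    (hab : E a b) (x y v : X) : ddot E d x y a v ≤ d a b + ddot E d x y b v := by
  have hstep (z : X) : hatd E d z a ≤ d a b + hatd E d z b := by
    rw [hd.hatd_comm hconn z a, hd.hatd_comm hconn z b]
    exact hatd_le_edge_add_hatd hd.nonneg hab (hconn b z)
  rw [ddot, ddot, ← min_add_add_left]
  exact min_le_min (by linarith only [hstep x]) (by linarith only [hstep y])

theorem detourDist_le_edge_add_detourDist (hd : IsGraphPseudometric E d)
    (hconn : ∀ u v, Joined E u v) (hab : E a b) (x y : X) (r : ℝ) (v : X) :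
    detourDist E d x y r a v ≤ d a b + detourDist E d x y r b v := by
  rw [detourDist, detourDist, ← min_add_add_left]
  exact min_le_min (hatd_le_edge_add_hatd hd.nonneg hab (hconn b v))
    (by linarith only [hd.ddot_le_edge_add_ddot hconn hab x y v])

theorem detourDist_le_extWt_add_detourDist (hd : IsGraphPseudometric E d)
    (hconn : ∀ u v, Joined E u v) (hr : 0 ≤ r) (hab : extEdge E x y a b) (v : X) :
    detourDist E d x y r a v ≤ extWt d x y r a b + detourDist E d x y r b v := by
  rw [extWt]
  split_ifs with hnew
  · rcases hnew with ⟨rfl, rfl⟩ | ⟨rfl, rfl⟩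
    · exact detourDist_le_add_detourDist hd.nonneg hr a b v
    · simpa only [detourDist_swap] using detourDist_le_add_detourDist hd.nonneg hr a b v
  · exact hd.detourDist_le_edge_add_detourDist hconn (hab.resolve_right hnew) x y r v

theorem detourDist_le_hatd_extEdge (hd : IsGraphPseudometric E d) (hconn : ∀ u v, Joined E u v)
    (hr : 0 ≤ r) (x y u v : X) :
    detourDist E d x y r u v ≤ hatd (extEdge E x y) (extWt d x y r) u v := by
  have hsub : detourDist E d x y r u v - detourDist E d x y r v v ≤
      hatd (extEdge E x y) (extWt d x y r) u v :=
    sub_le_hatd (f := fun z => detourDist E d x y r z v)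
      (fun _ _ hab => hd.detourDist_le_extWt_add_detourDist hconn hr hab v)
      ((hconn u v).mono fun _ _ => Or.inl)
  have hself : detourDist E d x y r v v ≤ 0 := (min_le_left _ _).trans_eq (hatd_self hd.nonneg v)
  linarith only [hsub, hself]

end IsGraphPseudometric

end Extension

theorem one_step_extension_estimates₃_general {E : X → X → Prop} {d : X → X → ℝ}
    (hd : IsGraphPseudometric E d) (hconn : ∀ u v, Joined E u v) {x y : X} {r : ℝ} (hr : 0 ≤ r)
    {u v : X} (hlt : hatd (extEdge E x y) (extWt d x y r) u v < hatd E d u v) :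
    r - checkd E d x y ≤ hatd (extEdge E x y) (extWt d x y r) u v - checkd E d u v := by
  have hcross : r + ddot E d x y u v ≤ hatd (extEdge E x y) (extWt d x y r) u v :=
    (min_le_iff.mp (hd.detourDist_le_hatd_extEdge hconn hr x y u v)).resolve_left hlt.not_ge
  have hlip : checkd E d u v ≤ checkd E d x y + ddot E d x y u v :=
    hd.checkd_le_checkd_add_ddot hconn x y u v
  linarith only [hcross, hlip]

/-- With `D = d ∪ {⟨xy, r⟩}` for `ď(x,y) ≤ r ≤ d̂(x,y)`: whenever
`d̂(u,v) ≠ D̂(u,v)`, we have `D̂(u,v) − ď(u,v) ≥ r − ď(x,y)`. -/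
theorem one_step_extension_estimates₃ (E : X → X → Prop) (d : X → X → ℝ)
    (hd : IsGraphPseudometric E d) (hvert : ∀ z : X, z ∈ Vtx E)
    (x y : X) (hxy : x ≠ y) (hnE : ¬ E x y) (r : ℝ)
    (hr₁ : checkd E d x y ≤ r) (hr₂ : r ≤ hatd E d x y) :
    ∀ u v : X, hatd E d u v ≠ hatd (extEdge E x y) (extWt d x y r) u v →
      r - checkd E d x y ≤
        hatd (extEdge E x y) (extWt d x y r) u v - checkd E d u v := by
  have hr : 0 ≤ r := (checkd_nonneg E d x y).trans hr₁
  exact fun u v hne => one_step_extension_estimates₃_general hd (hd.joined hvert) hr <|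
    (hatd_extEdge_le_hatd hd.nonneg (hd.joined hvert) hnE (hnE <| hd.symm ·) hr u v).lt_of_ne' hne

end GraphMetricPaper
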